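/- Let (a_1, ..., a_n) be a sequence of positive integers with M(a_1, ..., a_n)^2 = −Id (a solution of Problem III). Then a_i ≤ n for every index i. -/

import Mathlib

open Matrix

def elemMat (a : ℤ) : Matrix (Fin 2) (Fin 2) ℤ := !![a, -1; 1, 0]

/-- `M (a₁ :: ... :: aₙ)` is the product `E(aₙ) ⋯ E(a₁)` with the factor for `a₁` rightmost. -/
def M : List ℤ → Matrix (Fin 2) (Fin 2) ℤ
  | [] => 1
  | a :: t => M t * elemMat a

/-!
Since `det (M l) = 1`, the equation `M l ^ 2 = -1` forces the trace of `M l` to vanish. The trace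
depends on `l` only up to rotation. If every entry is at least `2`, then a unipotent change of basis
makes all the factors entrywise nonnegative, and a nonnegative integer matrix of determinant `1` has
trace at least `2`. So if the trace is at most `1` in absolute value, some entry is at most `1`, and
a local move removes it: `(a, 0, b) ↦ (a + b)` changes the sign of the matrix, and
`(a, 1, b) ↦ (a - 1, b - 1)` preserves it. Allowing the entry `0` keeps the second move available
when `a` or `b` is `1`. Both moves reduce the bound on the entries to the one for a shorter list.
-/

section Matrices

variable {R : Type*} [CommRing R]

theorem trace_sq_fin_two (A : Matrix (Fin 2) (Fin 2) R) :
    (A ^ 2).trace = A.trace ^ 2 - 2 * A.det := by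
  simp only [sq, trace_fin_two, det_fin_two, mul_apply, Fin.sum_univ_two]
  ring

theorem trace_eq_zero_of_sq_eq_neg_one [IsReduced R] {A : Matrix (Fin 2) (Fin 2) R}
    (hdet : A.det = 1) (hsq : A ^ 2 = -1) : A.trace = 0 := by
  have htrace := trace_sq_fin_two A
  rw [hsq, hdet, trace_neg, trace_fin_two, one_apply_eq, one_apply_eq] at htrace
  exact eq_zero_of_pow_eq_zero (n := 2) (by linear_combination -htrace)

theorem two_le_trace_of_nonneg_of_det_eq_one [LinearOrder R] [IsStrictOrderedRing R]
    {A : Matrix (Fin 2) (Fin 2) R} (hA : ∀ i j, 0 ≤ A i j) (hdet : A.det = 1) : 2 ≤ A.trace := by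
  rw [det_fin_two] at hdet
  rw [trace_fin_two]
  have hdiag : 1 ≤ A 0 0 * A 1 1 := by linarith [mul_nonneg (hA 0 1) (hA 1 0)]
  refine le_of_sq_le_sq ?_ (add_nonneg (hA 0 0) (hA 1 1))
  calc (2 : R) ^ 2 ≤ 4 * (A 0 0 * A 1 1) := by linarith
    _ ≤ (A 0 0 + A 1 1) ^ 2 := by linarith [four_mul_le_sq_add (A 0 0) (A 1 1)]

end Matrices

theorem M_append (s t : List ℤ) : M (s ++ t) = M t * M s := by
  induction s with
  | nil => simp [M]
  | cons a s ih => simp [M, ih, Matrix.mul_assoc]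

theorem det_M (l : List ℤ) : (M l).det = 1 := by
  induction l with
  | nil => simp [M]
  | cons a l ih => simp [M, ih, elemMat, det_fin_two]

theorem trace_M_eq_of_isRotated {l l' : List ℤ} (h : l.IsRotated l') :
    (M l).trace = (M l').trace := by
  obtain ⟨n, hn, rfl⟩ := List.isRotated_iff_mod.mp h
  rw [List.rotate_eq_drop_append_take hn, M_append, trace_mul_comm, ← M_append,
    List.take_append_drop]

theorem M_cons_zero_cons (a b : ℤ) (l : List ℤ) :
    M (a :: 0 :: b :: l) = -M ((a + b) :: l) := by
  have hmove : elemMat b * (elemMat 0 * elemMat a) = -elemMat (a + b) := by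
    simp [elemMat]
  simp only [M, Matrix.mul_assoc, hmove, Matrix.mul_neg]

theorem M_cons_one_cons (a b : ℤ) (l : List ℤ) :
    M (a :: 1 :: b :: l) = M ((a - 1) :: (b - 1) :: l) := by
  have hmove : elemMat b * (elemMat 1 * elemMat a) = elemMat (b - 1) * elemMat (a - 1) := by
    ext i j
    fin_cases i <;> fin_cases j <;> simp [elemMat] <;> ring
  simp only [M, Matrix.mul_assoc, hmove]

/-- The change of basis to `(1, 0), (1, 1)`, the extremal rays of the cone `0 ≤ y ≤ x`, which
`elemMat a` preserves when `2 ≤ a`. -/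
def shear : (Matrix (Fin 2) (Fin 2) ℤ)ˣ where
  val := !![1, 1; 0, 1]
  inv := !![1, -1; 0, 1]
  val_inv := by simp [one_fin_two]
  inv_val := by simp [one_fin_two]

theorem shear_conj_elemMat (a : ℤ) :
    shear⁻¹.val * elemMat a * shear.val = !![a - 1, a - 2; 1, 1] := by
  change !![1, -1; 0, 1] * elemMat a * !![1, 1; 0, 1] = _
  ext i j
  fin_cases i <;> fin_cases j <;> simp [elemMat] <;> ring

theorem shear_conj_M_nonneg {l : List ℤ} (hl : ∀ x ∈ l, 2 ≤ x) :
    ∀ i j, 0 ≤ (shear⁻¹.val * M l * shear.val) i j := by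
  induction l with
  | nil =>
    intro i j
    simp only [M, Matrix.mul_one, Units.inv_mul, one_apply]
    split_ifs <;> norm_num
  | cons a l ih =>
    intro i j
    obtain ⟨ha, hl⟩ := List.forall_mem_cons.mp hl
    have hfactor : shear⁻¹.val * M (a :: l) * shear.val =
        (shear⁻¹.val * M l * shear.val) * (shear⁻¹.val * elemMat a * shear.val) := by
      simp only [M, mul_assoc, Units.mul_inv_cancel_left]
    have hE : ∀ i j, 0 ≤ !![a - 1, a - 2; 1, 1] i j := by
      intro i j
      fin_cases i <;> fin_cases j <;> simp <;> lia
    rw [hfactor, shear_conj_elemMat, mul_apply]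
    exact Finset.sum_nonneg fun k _ => mul_nonneg (ih hl i k) (hE k j)

theorem two_le_trace_M {l : List ℤ} (hl : ∀ x ∈ l, 2 ≤ x) : 2 ≤ (M l).trace := by
  have h := two_le_trace_of_nonneg_of_det_eq_one (shear_conj_M_nonneg hl)
    (by rw [det_units_conj', det_M])
  rwa [trace_units_conj'] at h

theorem exists_isRotated_cons_cons_cons {α : Type*} {l : List α} {x : α} (hx : x ∈ l)
    (hlen : 3 ≤ l.length) : ∃ a b m, l.IsRotated (a :: x :: b :: m) := by
  obtain ⟨s, t, rfl⟩ := List.append_of_mem hx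
  have hrot : (s ++ x :: t).IsRotated (x :: (t ++ s)) := List.isRotated_append
  have hrest : 2 ≤ (t ++ s).length := by
    rw [hrot.perm.length_eq, List.length_cons] at hlen
    exact Nat.le_of_succ_le_succ hlen
  generalize t ++ s = r at hrot hrest
  match r, hrest with
  | b :: c :: r, _ =>
    obtain ⟨m, a, hm⟩ := (c :: r).eq_nil_or_concat.resolve_left (List.cons_ne_nil c r)
    rw [hm, List.concat_eq_append] at hrot
    exact ⟨a, b, m, hrot.trans (List.isRotated_concat a (x :: b :: m))⟩

/-- Every entry of `l` is at most the length of `l` plus the absolute trace of `M l`. The trace term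
covers the elliptic `M l` of trace `±1` together with those of trace `0`; for trace `±2` the bound
can fail, as `[a, 1, 1]` with `a` large shows. -/
def EntriesBounded (l : List ℤ) : Prop :=
  ∀ x ∈ l, x ≤ l.length + |(M l).trace|

namespace EntriesBounded

theorem of_isRotated {l l' : List ℤ} (h : l.IsRotated l') (hl' : EntriesBounded l') :
    EntriesBounded l := by
  intro x hx
  rw [h.perm.length_eq, trace_M_eq_of_isRotated h]
  exact hl' x (h.mem_iff.mp hx)

theorem cons_zero_cons {a b : ℤ} {l : List ℤ} (ha : 0 ≤ a) (hb : 0 ≤ b)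
    (h : EntriesBounded ((a + b) :: l)) : EntriesBounded (a :: 0 :: b :: l) := by
  simp only [EntriesBounded, M_cons_zero_cons, trace_neg, abs_neg, List.forall_mem_cons,
    List.length_cons, Nat.cast_add, Nat.cast_one] at h ⊢
  obtain ⟨hab, hl⟩ := h
  exact ⟨by linarith, by linarith, by linarith, fun x hx => by linarith [hl x hx]⟩

theorem cons_one_cons {a b : ℤ} {l : List ℤ}
    (h : EntriesBounded ((a - 1) :: (b - 1) :: l)) : EntriesBounded (a :: 1 :: b :: l) := by
  simp only [EntriesBounded, M_cons_one_cons, List.forall_mem_cons,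
    List.length_cons, Nat.cast_add, Nat.cast_one] at h ⊢
  obtain ⟨ha, hb, hl⟩ := h
  have htrace := abs_nonneg (M ((a - 1) :: (b - 1) :: l)).trace
  exact ⟨by linarith, by linarith, by linarith, fun x hx => by linarith [hl x hx]⟩

theorem of_length_le_two {l : List ℤ} (hlen : l.length ≤ 2) (hnonneg : ∀ x ∈ l, 0 ≤ x)
    (htr : |(M l).trace| ≤ 1) : EntriesBounded l := by
  match l with
  | [] => simp [EntriesBounded]
  | [a] =>
    have htrace : (M [a]).trace = a := by simp [M, elemMat, trace_fin_two]
    simp only [EntriesBounded, htrace, List.forall_mem_singleton, List.length_singleton]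
    linarith [le_abs_self a]
  | [a, b] =>
    have htrace : (M [a, b]).trace = a * b - 2 := by
      simp only [M, Matrix.one_mul, elemMat, mul_fin_two, trace_fin_two_of]
      ring
    simp only [List.forall_mem_cons] at hnonneg
    rw [htrace] at htr
    have hab : 0 < a * b := by linarith [neg_le_of_abs_le htr]
    have ha : 0 < a := pos_of_mul_pos_left hab hnonneg.2.1
    have hb : 0 < b := pos_of_mul_pos_right hab hnonneg.1
    have hmul : a * b ≤ 2 + |a * b - 2| := by linarith [le_abs_self (a * b - 2)]
    simp only [EntriesBounded, htrace, List.forall_mem_cons]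
    exact ⟨(le_mul_of_one_le_right ha.le hb).trans hmul,
      (le_mul_of_one_le_left hb.le ha).trans hmul, by simp⟩

end EntriesBounded

/-- One step of the descent: `l'` is shorter than `l`, has nonnegative entries and the same absolute
trace, and the bound on its entries carries over to `l`. -/
structure ReducesTo (l l' : List ℤ) : Prop where
  length_lt : l'.length < l.length
  nonneg : ∀ x ∈ l', 0 ≤ x
  abs_trace_eq : |(M l').trace| = |(M l).trace|
  entriesBounded : EntriesBounded l' → EntriesBounded l

theorem exists_reducesTo_of_zero_mem {l : List ℤ} (hlen : 3 ≤ l.length)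
    (hnonneg : ∀ x ∈ l, 0 ≤ x) (hzero : 0 ∈ l) : ∃ l', ReducesTo l l' := by
  obtain ⟨a, b, m, hrot⟩ := exists_isRotated_cons_cons_cons hzero hlen
  simp only [hrot.mem_iff, List.forall_mem_cons] at hnonneg
  obtain ⟨ha, -, hb, hm⟩ := hnonneg
  refine ⟨(a + b) :: m, ?_, List.forall_mem_cons.mpr ⟨add_nonneg ha hb, hm⟩, ?_, fun h => ?_⟩
  · simp [hrot.perm.length_eq]
  · rw [trace_M_eq_of_isRotated hrot, M_cons_zero_cons, trace_neg, abs_neg]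
  · exact .of_isRotated hrot (.cons_zero_cons ha hb h)

theorem exists_reducesTo_of_one_mem {l : List ℤ} (hlen : 3 ≤ l.length) (hpos : ∀ x ∈ l, 0 < x)
    (hone : 1 ∈ l) : ∃ l', ReducesTo l l' := by
  obtain ⟨a, b, m, hrot⟩ := exists_isRotated_cons_cons_cons hone hlen
  simp only [hrot.mem_iff, List.forall_mem_cons] at hpos
  obtain ⟨ha, -, hb, hm⟩ := hpos
  refine ⟨(a - 1) :: (b - 1) :: m, ?_, ?_, ?_, fun h => ?_⟩
  · simp [hrot.perm.length_eq]
  · simp only [List.forall_mem_cons]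
    exact ⟨Int.sub_nonneg_of_le ha, Int.sub_nonneg_of_le hb, fun x hx => (hm x hx).le⟩
  · rw [trace_M_eq_of_isRotated hrot, M_cons_one_cons]
  · exact .of_isRotated hrot (.cons_one_cons h)

theorem exists_reducesTo {l : List ℤ} (hlen : 3 ≤ l.length) (hnonneg : ∀ x ∈ l, 0 ≤ x)
    (htr : |(M l).trace| ≤ 1) : ∃ l', ReducesTo l l' := by
  by_cases hzero : 0 ∈ l
  · exact exists_reducesTo_of_zero_mem hlen hnonneg hzero
  have hpos : ∀ x ∈ l, 0 < x := fun x hx =>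
    (hnonneg x hx).lt_of_ne (ne_of_mem_of_not_mem hx hzero).symm
  refine exists_reducesTo_of_one_mem hlen hpos ?_
  by_contra hone
  have hl : ∀ x ∈ l, 2 ≤ x := fun x hx =>
    (Int.add_one_le_of_lt (hpos x hx)).lt_of_ne (ne_of_mem_of_not_mem hx hone).symm
  linarith [two_le_trace_M hl, le_abs_self (M l).trace]

theorem problemIII_entry_bound_general (l : List ℤ) (hnonneg : ∀ x ∈ l, 0 ≤ x)
    (htr : |(M l).trace| ≤ 1) : ∀ x ∈ l, x ≤ l.length + |(M l).trace| := by
  change EntriesBounded l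
  induction hn : l.length using Nat.strong_induction_on generalizing l with
  | _ n ih =>
  subst hn
  obtain hshort | hlong := Nat.lt_or_ge l.length 3
  · exact .of_length_le_two (Nat.le_of_lt_succ hshort) hnonneg htr
  · obtain ⟨l', hred⟩ := exists_reducesTo hlong hnonneg htr
    exact hred.entriesBounded
      (ih l'.length hred.length_lt l' hred.nonneg (hred.abs_trace_eq.trans_le htr) rfl)

/-- For a solution of Problem III, every entry satisfies `aᵢ ≤ n`. -/
theorem problemIII_entry_bound (l : List ℤ) (hpos : ∀ x ∈ l, 0 < x)
    (h : (M l) ^ 2 = -1) :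
    ∀ x ∈ l, x ≤ (l.length : ℤ) := by
  have htr : (M l).trace = 0 := trace_eq_zero_of_sq_eq_neg_one (det_M l) h
  simpa [htr] using problemIII_entry_bound_general l (fun x hx => (hpos x hx).le) (by simp [htr])
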